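/- The Killing form of a complex semisimple Lie algebra is negative definite on the compact real form u spanned over ℝ by X_α − X_{−α}, i(X_α + X_{−α}) (α positive) and iH_α (α simple). -/

import Mathlib

/-- A Chevalley basis datum for a complex semisimple Lie algebra `L`: a root system `roots` in a
real vector space `V`, with positive roots, simple roots, root vectors `X α`, coroot elements
`H α = [X α, X (-α)]`, integral structure constants `N α β` and Cartan integers `pair β α`,
satisfying the standard Chevalley relations, such that the `X α` and `H α` span `L`. -/
structure ChevalleyBasis (V : Type*) [AddCommGroup V] [Module ℝ V]
    (L : Type*) [LieRing L] [LieAlgebra ℂ L] where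
  /-- The set of roots. -/
  roots : Set V
  /-- The set of positive roots. -/
  posRoots : Set V
  /-- The set of simple roots. -/
  simples : Set V
  /-- The root vectors. -/
  X : V → L
  /-- The coroot elements of the Cartan subalgebra. -/
  H : V → L
  /-- The structure constants. -/
  N : V → V → ℤ
  /-- The Cartan integers `pair β α = β(H α)`. -/
  pair : V → V → ℤ
  posRoots_subset : posRoots ⊆ roots
  simples_subset : simples ⊆ posRoots
  roots_eq_union : roots = posRoots ∪ (-posRoots)
  neg_mem : ∀ α ∈ roots, -α ∈ roots
  zero_not_mem : (0 : V) ∉ roots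
  X_ne_zero : ∀ α ∈ roots, X α ≠ 0
  coroot_def : ∀ α ∈ roots, ⁅X α, X (-α)⁆ = H α
  pair_self : ∀ α ∈ roots, pair α α = 2
  lie_H_X : ∀ α ∈ roots, ∀ β ∈ roots, ⁅H α, X β⁆ = (pair β α : ℂ) • X β
  lie_H_H : ∀ α ∈ roots, ∀ β ∈ roots, ⁅H α, H β⁆ = 0
  lie_X_X_of_mem : ∀ α ∈ roots, ∀ β ∈ roots, α + β ∈ roots →
    ⁅X α, X β⁆ = (N α β : ℂ) • X (α + β)
  lie_X_X_of_not_mem : ∀ α ∈ roots, ∀ β ∈ roots, α + β ∉ roots → α + β ≠ 0 →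
    ⁅X α, X β⁆ = 0
  span_eq_top : Submodule.span ℂ ((X '' roots) ∪ (H '' roots)) = ⊤

variable {V : Type*} [AddCommGroup V] [Module ℝ V]
  {L : Type*} [LieRing L] [LieAlgebra ℂ L]
variable [Module ℝ L] [IsScalarTower ℝ ℂ L] [Module.Finite ℂ L]

/-- The generators of the compact real form: `Y_α = X_α - X_{-α}`, `Z_α = i(X_α + X_{-α})` for
positive roots `α` and `W_α = i H_α` for simple roots `α`. -/
def compactFormGenerators (C : ChevalleyBasis V L) : Set L :=
  {l | ∃ α ∈ C.posRoots, l = C.X α - C.X (-α)} ∪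
  {l | ∃ α ∈ C.posRoots, l = Complex.I • (C.X α + C.X (-α))} ∪
  {l | ∃ α ∈ C.simples, l = Complex.I • C.H α}

set_option linter.unusedSectionVars false

open LieAlgebra

namespace ChevalleyBasis


lemma H_neg (C : ChevalleyBasis V L) {α : V} (hα : α ∈ C.roots) : C.H (-α) = - C.H α := by
  rw [← C.coroot_def _ hα, ← C.coroot_def _ (C.neg_mem _ hα), neg_neg, lie_skew]

lemma H_ne_zero (C : ChevalleyBasis V L) {α : V} (hα : α ∈ C.roots) : C.H α ≠ 0 := by
  intro h
  have h1 := C.lie_H_X α hα α hα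
  rw [h, zero_lie, C.pair_self α hα] at h1
  have h2 := C.X_ne_zero α hα
  rcases smul_eq_zero.1 h1.symm with h3 | h3
  · norm_num at h3
  · exact h2 h3

lemma pair_neg (C : ChevalleyBasis V L) {α β : V} (hα : α ∈ C.roots) (hβ : β ∈ C.roots) :
    C.pair (-β) α = - C.pair β α := by
  have h1 := C.lie_H_H α hα β hβ
  rw [← C.coroot_def β hβ, leibniz_lie, C.lie_H_X α hα β hβ, C.lie_H_X α hα _ (C.neg_mem _ hβ),
    smul_lie, lie_smul, C.coroot_def β hβ, ← add_smul] at h1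
  rcases smul_eq_zero.1 h1 with h3 | h3
  · have : C.pair β α + C.pair (-β) α = 0 := by exact_mod_cast h3
    linarith
  · exact absurd h3 (C.H_ne_zero hβ)

/-- distinct roots have distinct weights -/
lemma exists_pair_ne (C : ChevalleyBasis V L) {α β : V} (hα : α ∈ C.roots)
    (hβ : β ∈ C.roots) (hne : α ≠ β) : ∃ γ ∈ C.roots, C.pair α γ ≠ C.pair β γ := by
  by_contra! hcon
  have hnb := C.neg_mem _ hβ
  have hz : ⁅C.X α, C.X (-β)⁆ = 0 := by
    by_cases hm : α + -β ∈ C.roots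
    · have h1 := C.lie_X_X_of_mem α hα _ hnb hm
      have h2 : ⁅C.H (α + -β), ⁅C.X α, C.X (-β)⁆⁆ = 0 := by
        rw [leibniz_lie, C.lie_H_X _ hm _ hα, C.lie_H_X _ hm _ hnb, C.pair_neg hm hβ,
          smul_lie, lie_smul, ← add_smul, hcon _ hm]
        simp
      rw [h1, lie_smul, C.lie_H_X _ hm _ hm, C.pair_self _ hm, smul_comm] at h2
      rw [h1]
      rcases smul_eq_zero.1 h2 with h3 | h3
      · norm_num at h3
      · exact h3
    · exact C.lie_X_X_of_not_mem α hα _ hnb hm (by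
        rw [← sub_eq_add_neg]; exact sub_ne_zero.2 hne)
  have t : IsSl2Triple (C.H (-β)) (C.X (-β)) (C.X β) := by
    refine ⟨C.H_ne_zero hnb, ?_, ?_, ?_⟩
    · rw [← C.coroot_def _ hnb, neg_neg]
    · rw [C.lie_H_X _ hnb _ hnb, C.pair_self _ hnb]
      simp [ofNat_smul_eq_nsmul]
    · rw [C.H_neg hβ, neg_lie, C.lie_H_X _ hβ _ hβ, C.pair_self _ hβ]
      simp [ofNat_smul_eq_nsmul]
  have P : t.HasPrimitiveVectorWith (C.X α) (-2 : ℂ) := by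
    refine ⟨C.X_ne_zero _ hα, ?_, ?_⟩
    · rw [C.H_neg hβ, neg_lie, C.lie_H_X _ hβ _ hα, hcon _ hβ, C.pair_self _ hβ]
      simp
    · rw [← lie_skew, hz, neg_zero]
  obtain ⟨n, hn⟩ := P.exists_nat
  have h5 : (n : ℝ) = -2 := by
    have := congrArg Complex.re hn
    simpa using this.symm
  have : (0:ℝ) ≤ n := n.cast_nonneg
  linarith

/-- real Cartan elements: eigenvalues -/
lemma killing_diag (S : Set L) (hS : Submodule.span ℂ S = ⊤) (h : L)
    (hd : ∀ v ∈ S, ∃ r : ℝ, ⁅h, v⁆ = (r : ℂ) • v) :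
    ∃ r : ℝ, 0 ≤ r ∧ killingForm ℂ L h h = (r : ℂ) ∧ (r = 0 → ∀ y : L, ⁅h, y⁆ = 0) := by
  classical
  let b := Module.Basis.ofSpan hS.ge
  have hb : ∀ i, b i ∈ S := fun i => Module.Basis.ofSpan_subset hS.ge ⟨i, rfl⟩
  have : Fintype _ := FiniteDimensional.fintypeBasisIndex b
  choose r hr using fun i => hd (b i) (hb i)
  refine ⟨∑ i, r i ^ 2, Finset.sum_nonneg fun i _ => sq_nonneg _, ?_, ?_⟩
  · rw [killingForm_apply_apply, LinearMap.trace_eq_matrix_trace ℂ b, Matrix.trace]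
    push_cast
    refine Finset.sum_congr rfl fun i _ => ?_
    rw [Matrix.diag_apply, LinearMap.toMatrix_apply]
    simp only [LinearMap.comp_apply, LieAlgebra.ad_apply, hr, lie_smul, map_smul,
      Finsupp.smul_apply, Module.Basis.repr_self, Finsupp.single_eq_same, smul_eq_mul]
    ring
  · intro h0 y
    rw [Finset.sum_eq_zero_iff_of_nonneg fun i _ => sq_nonneg _] at h0
    have : ad ℂ L h = 0 := b.ext fun i => by
      have := h0 i (Finset.mem_univ _)
      rw [LieAlgebra.ad_apply, hr, pow_eq_zero_iff two_ne_zero |>.1 this]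
      simp
    rw [← LieAlgebra.ad_apply ℂ, this, LinearMap.zero_apply]


lemma real_eigen (C : ChevalleyBasis V L) {h : L} (hh : h ∈ Submodule.span ℝ (C.H '' C.roots)) :
    ∀ v ∈ (C.X '' C.roots) ∪ (C.H '' C.roots), ∃ r : ℝ, ⁅h, v⁆ = (r : ℂ) • v := by
  intro v hv
  induction hh using Submodule.span_induction with
  | mem x hx =>
    obtain ⟨α, hα, rfl⟩ := hx
    rcases hv with ⟨β, hβ, rfl⟩ | ⟨β, hβ, rfl⟩
    · exact ⟨C.pair β α, by rw [C.lie_H_X _ hα _ hβ]; simp⟩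
    · exact ⟨0, by rw [C.lie_H_H _ hα _ hβ]; simp⟩
  | zero => exact ⟨0, by simp⟩
  | add x y _ _ h1 h2 =>
    obtain ⟨r, hr⟩ := h1
    obtain ⟨s, hs⟩ := h2
    exact ⟨r + s, by rw [add_lie, hr, hs]; push_cast; rw [add_smul]⟩
  | smul a x _ h1 =>
    obtain ⟨r, hr⟩ := h1
    refine ⟨a * r, ?_⟩
    rw [← algebraMap_smul ℂ a x, smul_lie, hr, smul_smul]
    simp

lemma killing_H (C : ChevalleyBasis V L) {α : V} (hα : α ∈ C.roots) :
    ∃ r : ℝ, 0 < r ∧ killingForm ℂ L (C.X α) (C.X (-α)) = (r : ℂ) := by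
  obtain ⟨r, h0, hr, hz⟩ := killing_diag _ C.span_eq_top _
    (C.real_eigen (Submodule.subset_span ⟨α, hα, rfl⟩))
  have hne : r ≠ 0 := by
    intro h
    have := hz h (C.X α)
    rw [C.lie_H_X _ hα _ hα, C.pair_self _ hα] at this
    rcases smul_eq_zero.1 this with h3 | h3
    · norm_num at h3
    · exact C.X_ne_zero _ hα h3
  refine ⟨r / 2, by positivity, ?_⟩
  have h1 : killingForm ℂ L ⁅C.H α, C.X α⁆ (C.X (-α)) = r := by
    rw [LieModule.traceForm_apply_lie_apply, C.coroot_def _ hα, hr]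
  rw [C.lie_H_X _ hα _ hα, C.pair_self _ hα] at h1
  simp only [map_smul, LinearMap.smul_apply, smul_eq_mul] at h1
  push_cast at h1 ⊢
  linear_combination h1 / 2


lemma killing_X_X (C : ChevalleyBasis V L) {α β : V} (hα : α ∈ C.roots) (hβ : β ∈ C.roots)
    (hne : α ≠ -β) : killingForm ℂ L (C.X α) (C.X β) = 0 := by
  obtain ⟨γ, hγ, h⟩ := C.exists_pair_ne hα (C.neg_mem _ hβ) hne
  rw [C.pair_neg hγ hβ] at h
  have h1 := LieModule.traceForm_apply_lie_apply ℂ L L (C.X α) (C.H γ) (C.X β)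
  rw [← lie_skew, C.lie_H_X _ hγ _ hα, C.lie_H_X _ hγ _ hβ] at h1
  simp only [map_smul, LinearMap.smul_apply, smul_eq_mul, map_neg, LinearMap.neg_apply] at h1
  have h2 : ((C.pair α γ + C.pair β γ : ℤ) : ℂ) ≠ 0 := by
    norm_cast
    omega
  have h3 : ((C.pair α γ + C.pair β γ : ℤ) : ℂ) * killingForm ℂ L (C.X α) (C.X β) = 0 := by
    push_cast
    linear_combination -h1
  exact (mul_eq_zero.1 h3).resolve_left h2

lemma killing_H_X (C : ChevalleyBasis V L) {α β : V} (hα : α ∈ C.roots) (hβ : β ∈ C.roots) :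
    killingForm ℂ L (C.H α) (C.X β) = 0 := by
  have h1 := LieModule.traceForm_apply_lie_apply ℂ L L (C.H α) (C.H β) (C.X β)
  rw [C.lie_H_H _ hα _ hβ, C.lie_H_X _ hβ _ hβ, C.pair_self _ hβ] at h1
  simp only [map_smul, smul_eq_mul, map_zero, LinearMap.zero_apply] at h1
  push_cast at h1
  linear_combination -h1 / 2


lemma roots_finite (C : ChevalleyBasis V L) : C.roots.Finite := by
  have : LinearIndependent ℂ (fun α : C.roots => C.X α) := by
    rw [linearIndependent_iff']
    intro s g hg i hi
    have h1 := congrArg (fun x => killingForm ℂ L x (C.X (-i))) hg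
    simp only [map_sum, map_smul, LinearMap.sum_apply, LinearMap.smul_apply, smul_eq_mul,
      map_zero, LinearMap.zero_apply] at h1
    rw [Finset.sum_eq_single i] at h1
    · obtain ⟨r, hr, h⟩ := C.killing_H i.2
      rw [h] at h1
      rcases mul_eq_zero.1 h1 with h2 | h2
      · exact h2
      · norm_cast at h2; linarith
    · intro j _ hj
      rw [C.killing_X_X j.2 (C.neg_mem _ i.2), mul_zero]
      rw [neg_neg]
      exact fun h => hj (Subtype.ext h)
    · exact fun h => absurd hi h
  exact this.finite

lemma killing_Hc (C : ChevalleyBasis V L) {h : L}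
    (hh : h ∈ Submodule.span ℝ (C.H '' C.roots)) {β : V} (hβ : β ∈ C.roots) :
    killingForm ℂ L h (C.X β) = 0 := by
  induction hh using Submodule.span_induction with
  | mem x hx =>
    obtain ⟨α, hα, rfl⟩ := hx
    exact C.killing_H_X hα hβ
  | zero => simp
  | add x y _ _ h1 h2 => rw [map_add, LinearMap.add_apply, h1, h2, add_zero]
  | smul a x _ h1 =>
    rw [← algebraMap_smul ℂ a x, map_smul, LinearMap.smul_apply, h1, smul_zero]

lemma tau_add (C : ChevalleyBasis V L) (f : Module.Dual ℂ L) {α β : V} (hα : α ∈ C.roots)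
    (hβ : β ∈ C.roots) (hγ : α + β ∈ C.roots) (hN0 : (C.N α β : ℂ) ≠ 0) :
    f (C.H (α + β)) / killingForm ℂ L (C.X (α + β)) (C.X (-(α + β))) =
      f (C.H α) / killingForm ℂ L (C.X α) (C.X (-α)) +
      f (C.H β) / killingForm ℂ L (C.X β) (C.X (-β)) := by
  obtain ⟨a, ha0, ha⟩ := C.killing_H hα
  obtain ⟨b, hb0, hb⟩ := C.killing_H hβ
  obtain ⟨c, hc0, hc⟩ := C.killing_H hγ
  have ha1 : (a : ℂ) ≠ 0 := by exact_mod_cast ha0.ne'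
  have hb1 : (b : ℂ) ≠ 0 := by exact_mod_cast hb0.ne'
  have hc1 : (c : ℂ) ≠ 0 := by exact_mod_cast hc0.ne'
  have hnγ := C.neg_mem _ hγ
  have e0 := C.lie_X_X_of_mem α hα β hβ hγ
  have ea : β + -(α + β) = -α := by abel
  have eb : α + -(α + β) = -β := by abel
  have e1 := C.lie_X_X_of_mem β hβ _ hnγ (ea ▸ C.neg_mem _ hα)
  have e2 := C.lie_X_X_of_mem α hα _ hnγ (eb ▸ C.neg_mem _ hβ)
  rw [ea] at e1
  rw [eb] at e2
  have j := lie_lie (C.X α) (C.X β) (C.X (-(α + β)))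
  have k1 := LieModule.traceForm_apply_lie_apply ℂ L L (C.X α) (C.X β) (C.X (-(α + β)))
  have k2 := LieModule.traceForm_apply_lie_apply' ℂ L L (C.X α) (C.X β) (C.X (-(α + β)))
  rw [e0, e1, e2, smul_lie, lie_smul, lie_smul, C.coroot_def _ hγ, C.coroot_def _ hα,
    C.coroot_def _ hβ] at j
  rw [e0, e1] at k1
  rw [e0, e2] at k2
  simp only [map_smul, LinearMap.smul_apply, smul_eq_mul] at k1 k2
  have j2 := congrArg f j
  simp only [map_smul, map_sub, smul_eq_mul] at j2
  rw [ha, hb, hc]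
  rw [ha, hc] at k1
  rw [hb, hc] at k2
  generalize (C.N α β : ℂ) = n at *
  generalize (C.N β (-(α + β)) : ℂ) = p at *
  generalize (C.N α (-(α + β)) : ℂ) = q at *
  have hp : p = n * c / a := by field_simp; linear_combination -k1
  have hq : q = - (n * c / b) := by field_simp; linear_combination k2
  rw [hp, hq] at j2
  field_simp at j2 ⊢
  linear_combination j2

lemma center_aux (C : ChevalleyBasis V L) {h : L} (hh : h ∈ Submodule.span ℝ (C.H '' C.roots))
    (hz : ∀ y : L, ⁅h, y⁆ = 0) : h = 0 := by
  classical
  rw [← Module.forall_dual_apply_eq_zero_iff ℂ]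
  intro f
  have hfin := C.roots_finite
  set R := hfin.toFinset with hR
  have hRm : ∀ {α}, α ∈ R ↔ α ∈ C.roots := by simp [hR]
  let k : V → ℂ := fun α => killingForm ℂ L (C.X α) (C.X (-α))
  have hk : ∀ α ∈ C.roots, k α ≠ 0 := by
    intro α hα
    obtain ⟨a, ha0, ha⟩ := C.killing_H hα
    simp only [k, ha]
    exact_mod_cast ha0.ne'
  let d : V → ℂ := fun α => f (C.H α) / k α
  have hdneg : ∀ α ∈ C.roots, d (-α) = - d α := by
    intro α hα
    simp only [d, k, C.H_neg hα, neg_neg, map_neg]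
    rw [LieModule.traceForm_comm ℂ L L (C.X (-α))]
    ring
  let D : L →ₗ[ℂ] L := ∑ α ∈ R, (d α / k α) •
    (LinearMap.toSpanSingleton ℂ L (C.X α)).comp ((killingForm ℂ L).flip (C.X (-α)))
  have hD : ∀ x, D x = ∑ α ∈ R, (d α / k α) • (killingForm ℂ L x (C.X (-α))) • C.X α := by
    intro x
    simp [D, LinearMap.sum_apply]
  have hDX : ∀ α ∈ C.roots, D (C.X α) = d α • C.X α := by
    intro α hα
    rw [hD, Finset.sum_eq_single α]
    · rw [smul_smul]
      congr 1
      exact div_mul_cancel₀ _ (hk α hα)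
    · intro β hβ hne
      rw [C.killing_X_X hα (C.neg_mem _ (hRm.1 hβ)) (by rw [neg_neg]; exact hne.symm)]
      simp
    · exact fun h => absurd (hRm.2 hα) h
  have hDH : ∀ α ∈ C.roots, D (C.H α) = 0 := by
    intro α hα
    rw [hD]
    refine Finset.sum_eq_zero fun β hβ => ?_
    rw [C.killing_H_X hα (C.neg_mem _ (hRm.1 hβ))]
    simp
  have hcomm : ∀ α ∈ C.roots, D * ad ℂ L (C.X α) - ad ℂ L (C.X α) * D
      = d α • ad ℂ L (C.X α) := by
    intro α hα
    refine LinearMap.ext_on C.span_eq_top ?_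
    rintro _ (⟨β, hβ, rfl⟩ | ⟨β, hβ, rfl⟩)
    · simp only [LinearMap.sub_apply, Module.End.mul_apply, LieAlgebra.ad_apply,
        LinearMap.smul_apply, hDX β hβ, lie_smul]
      by_cases h0 : α + β = 0
      · obtain rfl : β = -α := (neg_eq_of_add_eq_zero_right h0).symm
        rw [C.coroot_def _ hα, hDH _ hα, hdneg _ hα]
        simp
      · by_cases hm : α + β ∈ C.roots
        · rw [C.lie_X_X_of_mem _ hα _ hβ hm, map_smul, hDX _ hm]
          by_cases hN0 : (C.N α β : ℂ) = 0
          · simp [hN0]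
          · have : d (α + β) = d α + d β := C.tau_add f hα hβ hm hN0
            rw [this]
            module
        · rw [C.lie_X_X_of_not_mem _ hα _ hβ hm h0]
          simp
    · simp only [LinearMap.sub_apply, Module.End.mul_apply, LieAlgebra.ad_apply,
        LinearMap.smul_apply, hDH β hβ, lie_zero]
      rw [← lie_skew, C.lie_H_X _ hβ _ hα, map_neg, map_smul, hDX _ hα]
      module
  have htr : ∀ α ∈ C.roots, LinearMap.trace ℂ L (D * ad ℂ L (C.H α)) = f (C.H α) := by
    intro α hα
    have e1 : D * ad ℂ L (C.H α) = (D * ad ℂ L (C.X α) - ad ℂ L (C.X α) * D) * ad ℂ L (C.X (-α))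
        + (ad ℂ L (C.X α) * (D * ad ℂ L (C.X (-α))) - (D * ad ℂ L (C.X (-α))) * ad ℂ L (C.X α)) := by
      have e2 : ad ℂ L (C.H α) = ad ℂ L (C.X α) * ad ℂ L (C.X (-α))
          - ad ℂ L (C.X (-α)) * ad ℂ L (C.X α) := by
        refine LinearMap.ext fun y => ?_
        rw [← C.coroot_def _ hα]
        exact lie_lie _ _ _
      rw [e2]
      noncomm_ring
    rw [e1, map_add, map_sub, LinearMap.trace_mul_comm ℂ (ad ℂ L (C.X α)), sub_self, add_zero,
      hcomm α hα, smul_mul_assoc, map_smul, smul_eq_mul]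
    exact div_mul_cancel₀ _ (hk α hα)
  have key : LinearMap.trace ℂ L (D * ad ℂ L h) = f h := by
    clear hz
    induction hh using Submodule.span_induction with
    | mem x hx =>
      obtain ⟨α, hα, rfl⟩ := hx
      exact htr α hα
    | zero => simp
    | add x y _ _ h1 h2 => rw [map_add, mul_add, map_add, map_add, h1, h2]
    | smul a x _ h1 =>
      rw [← algebraMap_smul ℂ a x, map_smul, mul_smul_comm, map_smul, map_smul, h1]
  have : ad ℂ L h = 0 := LinearMap.ext fun y => hz y
  rw [← key, this, mul_zero, map_zero]

lemma decomp (C : ChevalleyBasis V L) {R : Finset V} (hR : ∀ α, α ∈ R ↔ α ∈ C.roots) {x : L}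
    (hx : x ∈ Submodule.span ℝ (compactFormGenerators C)) :
    ∃ c : V → ℂ, ∃ h ∈ Submodule.span ℝ (C.H '' C.roots),
      (∀ α, c (-α) = - (starRingEnd ℂ) (c α)) ∧ x = ∑ α ∈ R, c α • C.X α + Complex.I • h := by
  classical
  have neg_iff : ∀ α β : V, -α = β ↔ α = -β := fun α β => neg_eq_iff_eq_neg
  induction hx using Submodule.span_induction with
  | mem x hx =>
    rcases hx with (⟨α, hα, rfl⟩ | ⟨α, hα, rfl⟩) | ⟨α, hα, rfl⟩
    · have h1 := C.posRoots_subset hα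
      have h2 := C.neg_mem _ h1
      refine ⟨fun β => (if β = α then 1 else 0) - (if β = -α then 1 else 0), 0, zero_mem _, ?_, ?_⟩
      · intro β
        simp only [neg_iff, neg_neg]
        split_ifs <;> simp
      · simp only [sub_smul, ite_smul, one_smul, zero_smul, Finset.sum_sub_distrib]
        simp [hR, h1, h2]
    · have h1 := C.posRoots_subset hα
      have h2 := C.neg_mem _ h1
      refine ⟨fun β => (if β = α then Complex.I else 0) + (if β = -α then Complex.I else 0),
        0, zero_mem _, ?_, ?_⟩
      · intro β
        simp only [neg_iff, neg_neg]
        split_ifs <;> simp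
      · simp only [add_smul, ite_smul, zero_smul, Finset.sum_add_distrib]
        simp [hR, h1, h2]
    · exact ⟨0, C.H α, Submodule.subset_span ⟨α, C.posRoots_subset (C.simples_subset hα), rfl⟩,
        by simp, by simp⟩
  | zero => exact ⟨0, 0, zero_mem _, by simp, by simp⟩
  | add x y _ _ h1 h2 =>
    obtain ⟨c, h, hh, hc, rfl⟩ := h1
    obtain ⟨c', h', hh', hc', rfl⟩ := h2
    refine ⟨c + c', h + h', add_mem hh hh', ?_, ?_⟩
    · intro α
      simp only [Pi.add_apply, hc, hc', map_add]
      ring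
    · simp only [Pi.add_apply, add_smul, Finset.sum_add_distrib, smul_add]
      abel
  | smul a x _ h1 =>
    obtain ⟨c, h, hh, hc, rfl⟩ := h1
    refine ⟨fun α => a * c α, a • h, Submodule.smul_mem _ _ hh, ?_, ?_⟩
    · intro α
      simp [hc]
    · rw [← algebraMap_smul ℂ a, ← algebraMap_smul ℂ a h, smul_add, Finset.smul_sum,
        smul_comm Complex.I]
      simp [smul_smul]

end ChevalleyBasis

open LieAlgebra in
/-- The Killing form of a complex semisimple Lie algebra takes negative real values on the
nonzero elements of the compact real form `u` spanned over `ℝ` by `X_α - X_{-α}`,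
`i(X_α + X_{-α})` (`α` positive) and `i H_α` (`α` simple): it is negative definite on `u` as a
real bilinear form. -/
theorem killingForm_negative_definite_on_compact_form
    (C : ChevalleyBasis V L)
    (hN : ∀ α β : V, C.N α β = -(C.N (-α) (-β))) :
    ∀ x ∈ Submodule.span ℝ (compactFormGenerators C), x ≠ 0 →
      ∃ r : ℝ, r < 0 ∧
        LinearMap.trace ℂ L ((ad ℂ L x) ∘ₗ (ad ℂ L x)) = (r : ℂ) := by
  intro x hx hx0
  have hfin := C.roots_finite
  have hR : ∀ α, α ∈ hfin.toFinset ↔ α ∈ C.roots := by simp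
  generalize hfin.toFinset = R at hR
  obtain ⟨c, h, hh, hc, rfl⟩ := C.decomp hR hx
  obtain ⟨r, hr0, hr, hrz⟩ := ChevalleyBasis.killing_diag _ C.span_eq_top _ (C.real_eigen hh)
  choose! k hk0 hk using fun α (hα : α ∈ C.roots) => C.killing_H hα
  have hSX : ∀ β ∈ R, killingForm ℂ L (∑ α ∈ R, c α • C.X α) (C.X β) = c (-β) * k β := by
    intro β hβ
    have hβ' := (hR β).1 hβ
    have hnβ := C.neg_mem _ hβ'
    simp only [map_sum, map_smul, LinearMap.sum_apply, LinearMap.smul_apply, smul_eq_mul]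
    rw [Finset.sum_eq_single (-β)]
    · rw [LieModule.traceForm_comm, hk β hβ']
    · intro α hα hne
      rw [C.killing_X_X ((hR α).1 hα) hβ' hne, mul_zero]
    · exact fun hn => absurd ((hR _).2 hnβ) hn
  have hSS : killingForm ℂ L (∑ α ∈ R, c α • C.X α) (∑ α ∈ R, c α • C.X α)
      = ((-∑ α ∈ R, Complex.normSq (c α) * k α : ℝ) : ℂ) := by
    conv_lhs => rw [map_sum]
    push_cast
    rw [← Finset.sum_neg_distrib]
    refine Finset.sum_congr rfl fun β hβ => ?_
    rw [map_smul, hSX β hβ, hc, smul_eq_mul, Complex.normSq_eq_conj_mul_self]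
    ring
  have hhS : killingForm ℂ L h (∑ α ∈ R, c α • C.X α) = 0 := by
    rw [map_sum]
    refine Finset.sum_eq_zero fun β hβ => ?_
    rw [map_smul, C.killing_Hc hh ((hR β).1 hβ), smul_zero]
  have hSh : killingForm ℂ L (∑ α ∈ R, c α • C.X α) h = 0 := by
    rw [LieModule.traceForm_comm]; exact hhS
  have hnn : ∀ α ∈ R, 0 ≤ Complex.normSq (c α) * k α := fun α hα =>
    mul_nonneg (Complex.normSq_nonneg _) (hk0 α ((hR α).1 hα)).le
  have hs0 := Finset.sum_nonneg hnn
  refine ⟨-∑ α ∈ R, Complex.normSq (c α) * k α - r, ?_, ?_⟩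
  · by_contra! hcon
    have hr' : r = 0 := by linarith
    have hs' : ∑ α ∈ R, Complex.normSq (c α) * k α = 0 := by linarith
    rw [Finset.sum_eq_zero_iff_of_nonneg hnn] at hs'
    apply hx0
    rw [C.center_aux hh (hrz hr'), smul_zero, add_zero]
    refine Finset.sum_eq_zero fun α hα => ?_
    have h1 := (mul_eq_zero.1 (hs' α hα)).resolve_right (hk0 α ((hR α).1 hα)).ne'
    rw [Complex.normSq_eq_zero.1 h1, zero_smul]
  · rw [← killingForm_apply_apply]
    generalize (∑ α ∈ R, c α • C.X α) = S at *
    simp only [map_add, map_smul, LinearMap.add_apply, LinearMap.smul_apply, smul_eq_mul,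
      hSS, hhS, hSh, hr]
    push_cast
    linear_combination (r : ℂ) * Complex.I_mul_I
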